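/- Every tightly closed integer octagonal graph G = (𝒩, w) is ℤ-consistent: there exists a valuation ρ : 𝒩 → ℤ such that ρ(ī) = −ρ(i) for all i ∈ 𝒩 and ρ(i) − ρ(j) ≤ w(i,j) for all i, j ∈ 𝒩 with w(i,j) < +∞. -/

import Mathlib

/-- Extended rationals: ℚ ∪ {+∞}. -/
abbrev Qinf := WithTop ℚ

/-- Weight of a path (list of nodes): sum of the weights of its arcs. -/
def pathWeight {N : Type*} (w : N → N → Qinf) : List N → Qinf
  | [] => 0
  | [_] => 0
  | a :: b :: l => w a b + pathWeight w (b :: l)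

/-- A proper cycle: at least two arcs, first node equals last node,
    consecutive nodes distinct. -/
def IsProperCycle {N : Type*} (l : List N) : Prop :=
  3 ≤ l.length ∧ l.head? = l.getLast? ∧ l.Chain' (· ≠ ·)

/-- A graph is consistent if it has no proper cycle of negative weight. -/
def Consistent {N : Type*} (w : N → N → Qinf) : Prop :=
  ∀ l : List N, IsProperCycle l → 0 ≤ pathWeight w l

/-- A consistent graph is closed if self-loops have weight 0 and the
    triangle inequality holds. -/
def ClosedG {N : Type*} (w : N → N → Qinf) : Prop :=
  Consistent w ∧ (∀ i, w i i = 0) ∧ ∀ i j k, w i j ≤ w i k + w k j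

/-- The "bar" involution on nodes: ī = i+1 for even i, ī = i-1 for odd i. -/
def bar {n : ℕ} (i : Fin (2 * n)) : Fin (2 * n) :=
  if _h : i.val % 2 = 0 then ⟨i.val + 1, by have := i.isLt; omega⟩
  else ⟨i.val - 1, by have := i.isLt; omega⟩

/-- Coherence: w(i,j) = w(j̄,ī). -/
def Coherent {n : ℕ} (w : Fin (2 * n) → Fin (2 * n) → Qinf) : Prop :=
  ∀ i j, w i j = w (bar j) (bar i)

/-- An octagonal graph: consistent and coherent. -/
def Octagonal {n : ℕ} (w : Fin (2 * n) → Fin (2 * n) → Qinf) : Prop :=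
  Consistent w ∧ Coherent w

/-- Pointwise order on graphs. -/
def GLe {n : ℕ} (w₁ w₂ : Fin (2 * n) → Fin (2 * n) → Qinf) : Prop :=
  ∀ i j, w₁ i j ≤ w₂ i j

/-- Halving on ℚ∞ (with +∞/2 = +∞). -/
def half (x : Qinf) : Qinf := x.map (fun q => q / 2)

/-- Floored halving on ℚ∞ (with ⌊+∞/2⌋ = +∞). -/
def fhalf (x : Qinf) : Qinf := x.map (fun q => ((⌊q / 2⌋ : ℤ) : ℚ))

/-- Integer weights: every weight is an integer or +∞. -/
def IntWeights {n : ℕ} (w : Fin (2 * n) → Fin (2 * n) → Qinf) : Prop :=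
  ∀ i j, w i j = ⊤ ∨ ∃ d : ℤ, w i j = ((d : ℚ) : Qinf)

/-- A strongly closed octagonal graph. -/
def StronglyClosed {n : ℕ} (w : Fin (2 * n) → Fin (2 * n) → Qinf) : Prop :=
  Octagonal w ∧ ClosedG w ∧ ∀ i j, 2 * w i j ≤ w i (bar i) + w (bar j) j

/-- A tightly closed integer octagonal graph. -/
def TightlyClosed {n : ℕ} (w : Fin (2 * n) → Fin (2 * n) → Qinf) : Prop :=
  IntWeights w ∧ StronglyClosed w ∧
    ∀ i, w i (bar i) = ⊤ ∨ ∃ d : ℤ, w i (bar i) = (((2 * d : ℤ) : ℚ) : Qinf)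


theorem exists_int_between (L U : Set ℤ) (hL : L.Finite) (hU : U.Finite)
    (h : ∀ l ∈ L, ∀ u ∈ U, l ≤ u) : ∃ x, (∀ l ∈ L, l ≤ x) ∧ ∀ u ∈ U, x ≤ u := by
  rcases L.eq_empty_or_nonempty with rfl | hn
  · obtain ⟨x, hx⟩ := hU.bddBelow
    exact ⟨x, by simp, fun u hu => hx hu⟩
  · obtain ⟨m, hm, hmax⟩ := Set.exists_max_image L id hL hn
    exact ⟨m, hmax, fun u hu => h m hm u hu⟩

theorem exists_int_valuation {N : Type*} [Fintype N] [DecidableEq N] (b : N → N)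
    (hbb : ∀ i, b (b i) = i) (hbne : ∀ i, b i ≠ i)
    (F : N → N → Prop) (W : N → N → ℤ)
    (hFc : ∀ i j, F i j → F (b j) (b i)) (hWc : ∀ i j, F i j → W i j = W (b j) (b i))
    (hFt : ∀ i j k, F i k → F k j → F i j)
    (hWt : ∀ i j k, F i k → F k j → W i j ≤ W i k + W k j)
    (hW0 : ∀ i, W i i = 0)
    (hev : ∀ i, F i (b i) → ∃ d, W i (b i) = 2 * d) (S : Finset N) :
    ∃ ρ : N → ℤ, (∀ i, ρ (b i) = - ρ i) ∧
      ∀ i j, (i ∈ S ∨ b i ∈ S) → (j ∈ S ∨ b j ∈ S) → F i j → ρ i - ρ j ≤ W i j := by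
  induction S using Finset.induction_on with
  | empty =>
    exact ⟨fun _ => 0, by simp, by simp⟩
  | insert k S hk ih =>
    obtain ⟨ρ, hρ, hc⟩ := ih
    by_cases hbk : b k ∈ S
    · refine ⟨ρ, hρ, fun i j hi hj => hc i j ?_ ?_⟩
      · grind
      · grind
    have hFc' : ∀ i j, F (b j) (b i) → F i j := fun i j h => by
      simpa [hbb] using hFc _ _ h
    obtain ⟨x, hxL, hxU⟩ := exists_int_between
      ((fun i => ρ i - W i k) '' {i | (i ∈ S ∨ b i ∈ S) ∧ F i k} ∪
        {l | F (b k) k ∧ 2 * l = - W (b k) k})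
      ((fun i => ρ i + W k i) '' {i | (i ∈ S ∨ b i ∈ S) ∧ F k i} ∪
        {u | F k (b k) ∧ 2 * u = W k (b k)})
      (by
        refine (Set.toFinite _).union ((Set.finite_singleton (- W (b k) k / 2)).subset ?_)
        rintro l ⟨_, hl⟩
        simp only [Set.mem_singleton_iff]; omega)
      (by
        refine (Set.toFinite _).union ((Set.finite_singleton (W k (b k) / 2)).subset ?_)
        rintro l ⟨_, hl⟩
        simp only [Set.mem_singleton_iff]; omega)
      (by
        rintro l (⟨i, ⟨hi, hFi⟩, rfl⟩ | ⟨hF1, hl⟩) u (⟨j, ⟨hj, hFj⟩, rfl⟩ | ⟨hF2, hu⟩)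
        · have h1 := hc i j hi hj (hFt _ _ _ hFi hFj)
          have h2 := hWt _ _ _ hFi hFj
          dsimp only
          linarith
        · have h3 : F (b k) (b i) := hFc _ _ hFi
          have h4 : F k (b i) := hFt _ _ _ hF2 h3
          have h1 := hc i (b i) hi (by rw [hbb]; tauto) (hFt _ _ _ hFi h4)
          have h2 := hWt _ _ _ hFi h4
          have h5 := hWt _ _ _ hF2 h3
          have h6 := hWc _ _ hFi
          have h7 := hρ i
          dsimp only
          linarith
        · have h3 : F (b j) (b k) := hFc _ _ hFj
          have h4 : F (b j) k := hFt _ _ _ h3 hF1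
          have h1 := hc (b j) j (by rw [hbb]; tauto) hj (hFt _ _ _ h4 hFj)
          have h2 := hWt _ _ _ h4 hFj
          have h5 := hWt _ _ _ h3 hF1
          have h6 := hWc _ _ hFj
          have h7 := hρ j
          dsimp only
          linarith
        · have h2 := hWt _ _ _ hF2 hF1
          have h3 := hW0 k
          linarith)
    have hL1 : ∀ i, (i ∈ S ∨ b i ∈ S) → F i k → ρ i - W i k ≤ x :=
      fun i hi hF => hxL _ (Or.inl ⟨i, ⟨hi, hF⟩, rfl⟩)
    have hU1 : ∀ i, (i ∈ S ∨ b i ∈ S) → F k i → x ≤ ρ i + W k i :=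
      fun i hi hF => hxU _ (Or.inl ⟨i, ⟨hi, hF⟩, rfl⟩)
    have hL2 : F (b k) k → - W (b k) k ≤ 2 * x := by
      intro hF
      obtain ⟨d, hd⟩ := hev (b k) (by rwa [hbb])
      rw [hbb] at hd
      have := hxL (-d) (Or.inr ⟨hF, by rw [hd]; ring⟩)
      linarith
    have hU2 : F k (b k) → 2 * x ≤ W k (b k) := by
      intro hF
      obtain ⟨d, hd⟩ := hev k hF
      have := hxU d (Or.inr ⟨hF, by rw [hd]⟩)
      linarith
    have hL3 : ∀ i, (i ∈ S ∨ b i ∈ S) → F (b k) i → - x - ρ i ≤ W (b k) i := by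
      intro i hi hF
      have h1 : F (b i) k := by simpa [hbb] using hFc _ _ hF
      have h2 := hL1 (b i) (by rw [hbb]; tauto) h1
      have h3 := hWc _ _ hF
      rw [hbb] at h3
      have := hρ i
      linarith
    have hU3 : ∀ i, (i ∈ S ∨ b i ∈ S) → F i (b k) → ρ i + x ≤ W i (b k) := by
      intro i hi hF
      have h1 : F k (b i) := by simpa [hbb] using hFc _ _ hF
      have h2 := hU1 (b i) (by rw [hbb]; tauto) h1
      have h3 := hWc _ _ hF
      rw [hbb] at h3
      have := hρ i
      linarith
    have hne := hbne k
    refine ⟨fun i => if i = k then x else if i = b k then -x else ρ i, ?_, ?_⟩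
    · intro i
      by_cases h1 : i = k
      · subst h1; simp [hne]
      · by_cases h2 : i = b k
        · subst h2; simp [hbb, hne]
        · have h3 : b i ≠ k := fun h => h2 (by rw [← h, hbb])
          have h4 : b i ≠ b k := fun h => h1 (by rw [← hbb i, h, hbb])
          simp [h1, h2, h3, h4, hρ]
    · intro i j hi hj hF
      have key : ∀ i, (i ∈ insert k S ∨ b i ∈ insert k S) →
          i = k ∨ i = b k ∨ (i ≠ k ∧ i ≠ b k ∧ (i ∈ S ∨ b i ∈ S)) := by
        intro i hi
        by_cases h1 : i = k
        · exact Or.inl h1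
        by_cases h2 : i = b k
        · exact Or.inr (Or.inl h2)
        have h3 : b i ≠ k := fun h => h2 (by rw [← h, hbb])
        simp only [Finset.mem_insert, h1, h3, false_or] at hi
        exact Or.inr (Or.inr ⟨h1, h2, hi⟩)
      rcases key i hi with rfl | rfl | ⟨hi1, hi2, hi3⟩ <;>
      rcases key j hj with h | h | ⟨hj1, hj2, hj3⟩
      · subst h; simp [hW0]
      · subst h; simp only [if_true, hne, if_false]; have := hU2 hF; linarith
      · simp only [if_true, hj1, hj2, if_false]; have := hU1 j hj3 hF; linarith
      · subst h; simp only [if_true, hne, if_false]; have := hL2 hF; linarith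
      · subst h; simp [hW0]
      · simp only [if_true, hne, hj1, hj2, if_false]; exact hL3 j hj3 hF
      · subst h; simp only [if_true, hi1, hi2, if_false]; have := hL1 i hi3 hF; linarith
      · subst h; simp only [if_true, hne, hi1, hi2, if_false]; have := hU3 i hi3 hF; linarith
      · simp only [hi1, hi2, hj1, hj2, if_false]; exact hc i j hi3 hj3 hF

theorem bar_bar_eq {n : ℕ} (i : Fin (2 * n)) : bar (bar i) = i := by
  have hv : ∀ j : Fin (2 * n), (bar j).val = if j.val % 2 = 0 then j.val + 1 else j.val - 1 := by
    intro j
    unfold bar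
    split_ifs <;> rfl
  apply Fin.ext
  rw [hv, hv]
  split_ifs <;> omega

theorem bar_ne_self {n : ℕ} (i : Fin (2 * n)) : bar i ≠ i := by
  intro h
  have := congrArg Fin.val h
  unfold bar at this
  split_ifs at this <;> simp at this <;> omega

/-- Every tightly closed integer octagonal graph is ℤ-consistent. -/
theorem tightly_closed_is_Z_consistent
    {n : ℕ} (hn : 1 ≤ n) (w : Fin (2 * n) → Fin (2 * n) → Qinf)
    (htc : TightlyClosed w) :
    ∃ ρ : Fin (2 * n) → ℤ,
      (∀ i, ρ (bar i) = -ρ i) ∧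
      ∀ i j, w i j < ⊤ → (((ρ i - ρ j : ℤ) : ℚ) : Qinf) ≤ w i j := by
  obtain ⟨hint, ⟨⟨-, hcoh⟩, ⟨-, h0, htri⟩, -⟩, hev⟩ := htc
  have hW : ∀ i j, ∃ d : ℤ, w i j ≠ ⊤ → w i j = ((d : ℚ) : Qinf) := by
    intro i j
    rcases hint i j with h | ⟨d, h⟩
    · exact ⟨0, fun h' => absurd h h'⟩
    · exact ⟨d, fun _ => h⟩
  choose W hW using hW
  have hFt : ∀ i j k, w i k ≠ ⊤ → w k j ≠ ⊤ → w i j ≠ ⊤ := by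
    intro i j k h1 h2 h3
    have := htri i j k
    rw [h3, top_le_iff] at this
    exact WithTop.add_ne_top.2 ⟨h1, h2⟩ this
  have hinj : ∀ a c : ℤ, ((a : ℚ) : Qinf) = ((c : ℚ) : Qinf) → a = c := by
    intro a c h
    exact_mod_cast WithTop.coe_injective h
  obtain ⟨ρ, hρ, hc⟩ := exists_int_valuation (bar (n := n)) bar_bar_eq bar_ne_self
    (fun i j => w i j ≠ ⊤) W
    (fun i j h => by rwa [← hcoh])
    (fun i j h => hinj _ _ (by
      have h' : w (bar j) (bar i) ≠ ⊤ := by rwa [← hcoh]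
      rw [← hW i j h, ← hW _ _ h', ← hcoh]))
    hFt
    (fun i j k h1 h2 => by
      have h3 := htri i j k
      rw [hW _ _ h1, hW _ _ h2, hW _ _ (hFt i j k h1 h2), ← WithTop.coe_add,
        WithTop.coe_le_coe] at h3
      exact_mod_cast h3)
    (fun i => hinj _ _ (by
      rw [← hW i i (by rw [h0]; exact WithTop.zero_ne_top), h0]; simp))
    (fun i h => by
      rcases hev i with h' | ⟨d, hd⟩
      · exact absurd h' h
      · exact ⟨d, hinj _ _ (by rw [← hW _ _ h, hd])⟩)
    Finset.univ
  refine ⟨ρ, hρ, fun i j h => ?_⟩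
  have h1 := hc i j (by simp) (by simp) h.ne
  rw [hW i j h.ne, WithTop.coe_le_coe]
  exact_mod_cast h1
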